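/- Let X be a complex Banach space and let T be a bounded ℂ-linear operator on X that is invertible and doubly power-bounded, i.e. sup_{n∈ℤ} ‖Tⁿ‖ < ∞. If the spectrum of T equals {1}, then T is the identity operator. -/

import Mathlib

open Filter Topology

section BanachAlgebra

variable {A : Type*} [NormedRing A] [NormedAlgebra ℂ A]

/-- If the integer powers of `u` are bounded by `C`, then any `g` with
`(1 - w (u - 1)) g = 1` satisfies `‖g‖ * | ‖1 + w‖ - ‖w‖ | ≤ C`. -/
theorem abs_norm_sub_mul_norm_le_of_zpow_bounded (u : Aˣ) {C : ℝ}
    (hC : ∀ n : ℤ, ‖((u ^ n : Aˣ) : A)‖ ≤ C) {w : ℂ} {g : A}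
    (hg : (1 - w • ((u : A) - 1)) * g = 1) :
    |‖1 + w‖ - ‖w‖| * ‖g‖ ≤ C := by
  have hbdd : BddAbove (Set.range fun n : ℤ ↦ ‖((u ^ n : Aˣ) : A) * g‖) := by
    refine ⟨C * ‖g‖, ?_⟩
    rintro _ ⟨n, rfl⟩
    exact (norm_mul_le _ _).trans (mul_le_mul_of_nonneg_right (hC n) (norm_nonneg _))
  set K := ⨆ n : ℤ, ‖((u ^ n : Aˣ) : A) * g‖
  have hle (n : ℤ) : ‖((u ^ n : Aˣ) : A) * g‖ ≤ K := le_ciSup hbdd n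
  have hgK : ‖g‖ ≤ K := by simpa using hle 0
  have hrec (n : ℤ) : (1 + w) • (((u ^ n : Aˣ) : A) * g) =
      ((u ^ n : Aˣ) : A) + w • (((u ^ (n + 1) : Aˣ) : A) * g) := by
    have h : (1 + w) • g = 1 + w • ((u : A) * g) := by
      rw [← hg, sub_mul, smul_mul_assoc, sub_mul, one_mul, add_smul, one_smul, smul_sub]
      abel
    rw [← mul_smul_comm, h, mul_add, mul_one, mul_smul_comm, zpow_add_one, Units.val_mul,
      mul_assoc]
  have h₁ : ‖1 + w‖ * K ≤ C + ‖w‖ * K := by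
    rw [Real.mul_iSup_of_nonneg (norm_nonneg _)]
    refine ciSup_le fun n ↦ ?_
    rw [← norm_smul, hrec]
    refine (norm_add_le _ _).trans (add_le_add (hC n) ?_)
    rw [norm_smul]
    exact mul_le_mul_of_nonneg_left (hle _) (norm_nonneg _)
  have h₂ : ‖w‖ * K ≤ C + ‖1 + w‖ * K := by
    rw [Real.mul_iSup_of_nonneg (norm_nonneg w)]
    refine ciSup_le fun n ↦ ?_
    have h := hrec (n - 1)
    rw [sub_add_cancel, ← sub_eq_iff_eq_add'] at h
    rw [← norm_smul, ← h]
    refine (norm_sub_le _ _).trans ?_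
    rw [add_comm, norm_smul]
    exact add_le_add (hC _) (mul_le_mul_of_nonneg_left (hle _) (norm_nonneg _))
  refine (mul_le_mul_of_nonneg_left hgK (abs_nonneg _)).trans ?_
  rcases abs_cases (‖1 + w‖ - ‖w‖) with ⟨h, -⟩ | ⟨h, -⟩ <;> rw [h] <;> linarith

/-- On the circle `‖w‖ = ρ`, the polynomial `1 + (w + w²) / ρ²` has modulus
`| ‖1 + w‖² - ‖w‖² | / ρ`. -/
theorem norm_one_add_div_sq_le {ρ : ℝ} (hρ : 0 < ρ) {w : ℂ} (hw : ‖w‖ = ρ) :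
    ‖1 + (w + w ^ 2) / (ρ : ℂ) ^ 2‖ ≤ (2 + ρ⁻¹) * |‖1 + w‖ - ‖w‖| := by
  have hρ' : (ρ : ℂ) ≠ 0 := by exact_mod_cast hρ.ne'
  have hconj : w * (starRingEnd ℂ) w = (ρ : ℂ) ^ 2 := by rw [Complex.mul_conj', hw]
  have hsq : ‖1 + w‖ ^ 2 - ‖w‖ ^ 2 = 1 + 2 * w.re := by
    simp only [Complex.sq_norm, Complex.normSq_apply, Complex.add_re, Complex.add_im,
      Complex.one_re, Complex.one_im]
    ring
  have hfac : 1 + (w + w ^ 2) / (ρ : ℂ) ^ 2 =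
      w / (ρ : ℂ) ^ 2 * ((‖1 + w‖ ^ 2 - ‖w‖ ^ 2 : ℝ) : ℂ) := by
    have hre : ((1 + 2 * w.re : ℝ) : ℂ) = 1 + (w + (starRingEnd ℂ) w) := by
      rw [Complex.add_conj]; push_cast; ring
    rw [hsq, hre]
    field_simp
    rw [← hconj]
    ring
  have hsum : ‖1 + w‖ + ‖w‖ ≤ 2 * ρ + 1 := by
    have := norm_add_le 1 w
    rw [norm_one] at this
    linarith
  calc ‖1 + (w + w ^ 2) / (ρ : ℂ) ^ 2‖
      = ρ⁻¹ * (‖1 + w‖ + ‖w‖) * |‖1 + w‖ - ‖w‖| := by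
        rw [hfac, norm_mul, norm_div, norm_pow, Complex.norm_real, Complex.norm_real,
          Real.norm_eq_abs, Real.norm_eq_abs, sq_sub_sq, abs_mul, abs_of_pos hρ,
          abs_of_nonneg (by positivity : 0 ≤ ‖1 + w‖ + ‖w‖), hw]
        field_simp
    _ ≤ ρ⁻¹ * (2 * ρ + 1) * |‖1 + w‖ - ‖w‖| := by gcongr
    _ = (2 + ρ⁻¹) * |‖1 + w‖ - ‖w‖| := by
        congr 1
        field_simp

theorem isUnit_one_sub_smul_of_spectrum_subset {a : A} (ha : spectrum ℂ a ⊆ {1}) (w : ℂ) :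
    IsUnit (1 - w • (a - 1)) := by
  rcases eq_or_ne w 0 with rfl | hw
  · simp
  have hmem : w⁻¹ + 1 ∉ spectrum ℂ a := fun h ↦ inv_ne_zero hw (by simpa using ha h)
  have h := (spectrum.notMem_iff.mp hmem).smul (Units.mk0 w hw)
  convert h using 1
  rw [Units.smul_mk0, Algebra.algebraMap_eq_smul_one, smul_sub, smul_sub, smul_smul, mul_add,
    mul_inv_cancel₀ hw, mul_one, add_smul, one_smul]
  abel

/-- **Gelfand theorem** in a complex Banach algebra: a doubly power-bounded element whose
spectrum is contained in `{1}` is the identity. -/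
theorem Units.val_eq_one_of_zpow_bounded_of_spectrum_subset [CompleteSpace A] (u : Aˣ) {C : ℝ}
    (hC : ∀ n : ℤ, ‖((u ^ n : Aˣ) : A)‖ ≤ C) (hu : spectrum ℂ (u : A) ⊆ {1}) :
    (u : A) = 1 := by
  have hunit := isUnit_one_sub_smul_of_spectrum_subset hu
  let g : ℂ → A := fun w ↦ Ring.inverse (1 - w • ((u : A) - 1))
  have hg (w : ℂ) : (1 - w • ((u : A) - 1)) * g w = 1 := Ring.mul_inverse_cancel _ (hunit w)
  have hd : Differentiable ℂ g := fun w ↦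
    (differentiableAt_inverse (𝕜 := ℂ) (hunit w)).comp w
      (f := fun z : ℂ ↦ 1 - z • ((u : A) - 1)) (by fun_prop)
  have hbound (w : ℂ) : ‖g w‖ ≤ 2 * C := by
    have hmax : ∀ᶠ ρ : ℝ in atTop,
        ‖(1 + (w + w ^ 2) / (ρ : ℂ) ^ 2) • g w‖ ≤ (2 + ρ⁻¹) * C := by
      filter_upwards [eventually_gt_atTop 0, eventually_gt_atTop ‖w‖] with ρ hρ hwρ
      refine Complex.norm_le_of_forall_mem_frontier_norm_le
        (f := fun z ↦ (1 + (z + z ^ 2) / (ρ : ℂ) ^ 2) • g z) (U := Metric.ball 0 ρ)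
        Metric.isBounded_ball (Differentiable.diffContOnCl (by fun_prop)) (fun z hz ↦ ?_)
        (subset_closure (by simpa using hwρ))
      rw [frontier_ball _ hρ.ne', mem_sphere_zero_iff_norm] at hz
      rw [norm_smul]
      calc ‖1 + (z + z ^ 2) / (ρ : ℂ) ^ 2‖ * ‖g z‖
          ≤ (2 + ρ⁻¹) * |‖1 + z‖ - ‖z‖| * ‖g z‖ := by
            gcongr
            exact norm_one_add_div_sq_le hρ hz
        _ = (2 + ρ⁻¹) * (|‖1 + z‖ - ‖z‖| * ‖g z‖) := mul_assoc _ _ _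
        _ ≤ (2 + ρ⁻¹) * C := by
            gcongr
            exact abs_norm_sub_mul_norm_le_of_zpow_bounded u hC (hg z)
    have hinv : Tendsto (fun ρ : ℝ ↦ ((ρ⁻¹ : ℝ) : ℂ)) atTop (𝓝 0) := by
      simpa [Function.comp_def] using
        (Complex.continuous_ofReal.tendsto 0).comp tendsto_inv_atTop_zero
    have hleft : Tendsto (fun ρ : ℝ ↦ ‖(1 + (w + w ^ 2) / (ρ : ℂ) ^ 2) • g w‖) atTop
        (𝓝 ‖g w‖) := by
      have h := ((((hinv.pow 2).const_mul (w + w ^ 2)).const_add 1).smul_const (g w)).norm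
      simpa [div_eq_mul_inv] using h
    have hright : Tendsto (fun ρ : ℝ ↦ (2 + ρ⁻¹) * C) atTop (𝓝 (2 * C)) := by
      simpa using (tendsto_inv_atTop_zero.const_add (2 : ℝ)).mul_const C
    exact le_of_tendsto_of_tendsto hleft hright hmax
  have hconst : g 1 = g 0 := hd.apply_eq_apply_of_bounded
    ((Metric.isBounded_closedBall (x := (0 : A)) (r := 2 * C)).subset
      (by rintro _ ⟨w, rfl⟩; simpa using hbound w)) 1 0
  have h := hg 1
  rw [hconst] at h
  simpa [g, sub_eq_zero] using h

end BanachAlgebra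

/-- Gelfand. Let `T` be an invertible bounded complex-linear operator on a
complex Banach space which is doubly power-bounded, i.e. `sup_{n ∈ ℤ} ‖Tⁿ‖ < ∞`. If the
spectrum of `T` equals `{1}`, then `T` is the identity operator. -/
theorem gelfand_doubly_power_bounded
    {X : Type*} [NormedAddCommGroup X] [NormedSpace ℂ X] [CompleteSpace X]
    (T : (X →L[ℂ] X)ˣ)
    (hpb : ∃ C : ℝ, ∀ n : ℤ, ‖((T ^ n : (X →L[ℂ] X)ˣ) : X →L[ℂ] X)‖ ≤ C)
    (hspec : spectrum ℂ (T : X →L[ℂ] X) = {1}) :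
    (T : X →L[ℂ] X) = 1 := by
  obtain ⟨C, hC⟩ := hpb
  exact T.val_eq_one_of_zpow_bounded_of_spectrum_subset hC hspec.subset
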